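/- Let ν denote the standard Gaussian-type measure dν_{x₀;t}(x) = (4π(t₀−t))^{−n/2} e^{−|x−x₀|²/(4(t₀−t))} dx and f_{x₀}(x) = |x−x₀|²/(4(t₀−t)). Fix α > 0 and a nonnegative integer m. There is a constant C = C(n) such that for every polynomial p on ℝⁿ of degree at most m and every x₀, t < t₀: ∫ p² dν_{x₀;t} ≤ e^{Cα(1+m)} ∫ p² e^{−α f_{x₀}} dν_{x₀;t}. -/

import Mathlib

open MeasureTheory

noncomputable section

/-- The conjugate heat kernel (Gaussian) measure on `ℝⁿ` centered at `x₀` with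
variance parameter `τ`: `ν_{x₀; t₀−τ}` (density `(4πτ)^{−n/2} e^{−|x−x₀|²/(4τ)}`). -/
def gmeas (n : ℕ) (x₀ : EuclideanSpace ℝ (Fin n)) (τ : ℝ) :
    Measure (EuclideanSpace ℝ (Fin n)) :=
  volume.withDensity fun x =>
    ENNReal.ofReal ((4 * Real.pi * τ) ^ (-(n : ℝ) / 2) * Real.exp (-‖x - x₀‖ ^ 2 / (4 * τ)))



section Algebra
open MvPolynomial

variable {n : ℕ}

lemma aux_adj (L : MvPolynomial (Fin n) ℝ →ₗ[ℝ] ℝ) (i : Fin n) (s : ℝ)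
    (Y : MvPolynomial (Fin n) ℝ) (hY : pderiv i Y = C s)
    (hL : ∀ q, L (pderiv i q) = L (Y * q)) (q : MvPolynomial (Fin n) ℝ) :
    L ((Y * q - pderiv i q) * (Y * q - pderiv i q))
      = s * L (q * q) + L (pderiv i q * pderiv i q) := by
  have h1 := hL (q * (Y * q - pderiv i q))
  have h2 := hL (q * pderiv i q)
  simp only [pderiv_mul, map_sub, hY] at h1 h2
  have e1 : (Y * q - pderiv i q) * (Y * q - pderiv i q)
      = Y * (q * (Y * q - pderiv i q)) - (Y * (q * pderiv i q) - pderiv i q * pderiv i q) := by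
    ring
  have e2 : pderiv i q * (Y * q - pderiv i q)
      + q * (C s * q + Y * pderiv i q - pderiv i (pderiv i q))
      = s • (q * q) + (2 : ℝ) • (Y * (q * pderiv i q))
        - (pderiv i q * pderiv i q + q * pderiv i (pderiv i q)) := by
    simp only [smul_eq_C_mul, map_ofNat]
    ring
  rw [e2] at h1
  rw [e1, map_sub, ← h1, map_sub, map_sub, map_add, map_smul, map_smul, h2]
  simp only [smul_eq_mul, map_add]
  ring

lemma aux_bern (L : MvPolynomial (Fin n) ℝ →ₗ[ℝ] ℝ) (hpos : ∀ q, 0 ≤ L (q * q))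
    (i : Fin n) (s : ℝ) (hs : 0 < s)
    (Y : MvPolynomial (Fin n) ℝ) (hY : pderiv i Y = C s)
    (hL : ∀ q, L (pderiv i q) = L (Y * q)) (m : ℕ) :
    ∀ p : MvPolynomial (Fin n) ℝ, (∀ d, coeff d p ≠ 0 → d i ≤ m) →
      L (pderiv i p * pderiv i p) ≤ s * m * L (p * p) := by
  induction m with
  | zero =>
    intro p hp
    have : pderiv i p = 0 := by
      ext d
      rw [coeff_pderiv, coeff_zero]
      by_contra h
      have := hp _ (left_ne_zero_of_mul h)
      simp at this
    simp [this]
  | succ m ih =>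
    intro p hp
    have h := ih (pderiv i p) (by
      intro d hd
      rw [coeff_pderiv] at hd
      have := hp _ (left_ne_zero_of_mul hd)
      simpa using this)
    have ha := aux_adj L i s Y hY hL (pderiv i p)
    have h2 := hL (p * pderiv i p)
    simp only [pderiv_mul] at h2
    set c : ℝ := s * (m + 1) with hc
    have hc0 : 0 < c := by positivity
    have hq := hpos ((Y * pderiv i p - pderiv i (pderiv i p)) - c • p)
    have e : ((Y * pderiv i p - pderiv i (pderiv i p)) - c • p)
        * ((Y * pderiv i p - pderiv i (pderiv i p)) - c • p)
        = (Y * pderiv i p - pderiv i (pderiv i p)) * (Y * pderiv i p - pderiv i (pderiv i p))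
        - (2 * c) • (Y * (p * pderiv i p)) + (2 * c) • (p * pderiv i (pderiv i p))
        + (c * c) • (p * p) := by
      simp only [smul_eq_C_mul, map_mul, map_ofNat]
      ring
    rw [e] at hq
    simp only [map_add, map_sub, map_smul, smul_eq_mul] at hq h2
    rw [ha, ← h2] at hq
    have : 0 ≤ c * (c * L (p * p) - L (pderiv i p * pderiv i p)) := by
      have : s * L (pderiv i p * pderiv i p) + s * m * L (pderiv i p * pderiv i p)
        = c * L (pderiv i p * pderiv i p) := by rw [hc]; ring
      nlinarith
    have := nonneg_of_mul_nonneg_right this hc0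
    push_cast
    linarith

lemma aux_Y (L : MvPolynomial (Fin n) ℝ →ₗ[ℝ] ℝ) (hpos : ∀ q, 0 ≤ L (q * q))
    (i : Fin n) (s : ℝ) (hs : 0 < s)
    (Y : MvPolynomial (Fin n) ℝ) (hY : pderiv i Y = C s)
    (hL : ∀ q, L (pderiv i q) = L (Y * q)) (m : ℕ)
    (p : MvPolynomial (Fin n) ℝ) (hp : p.totalDegree ≤ m) :
    L ((Y * p) * (Y * p)) ≤ s * (4 * m + 2) * L (p * p) := by
  have hb := aux_bern L hpos i s hs Y hY hL m p (by
    intro d hd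
    have h1 := le_totalDegree (mem_support_iff.2 hd)
    refine le_trans ?_ (h1.trans hp)
    rw [Finsupp.sum_fintype _ _ (fun _ => rfl)]
    exact Finset.single_le_sum (f := fun j => d j) (fun _ _ => Nat.zero_le _) (Finset.mem_univ i))
  have ha := aux_adj L i s Y hY hL p
  have hq := hpos (Y * p - (2 : ℝ) • pderiv i p)
  have e : (Y * p - (2 : ℝ) • pderiv i p) * (Y * p - (2 : ℝ) • pderiv i p)
      = (2 : ℝ) • ((Y * p - pderiv i p) * (Y * p - pderiv i p))
        + (2 : ℝ) • (pderiv i p * pderiv i p) - (Y * p) * (Y * p) := by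
    simp only [smul_eq_C_mul, map_ofNat]
    ring
  rw [e] at hq
  simp only [map_add, map_sub, map_smul, smul_eq_mul] at hq ha
  rw [ha] at hq
  nlinarith

end Algebra

section Analysis
open MvPolynomial

variable {n : ℕ}

lemma aux_growth (a : EuclideanSpace ℝ (Fin n)) (q : MvPolynomial (Fin n) ℝ) :
    ∀ c : ℝ, 0 < c → ∃ K : ℝ, 0 ≤ K ∧ ∀ x : EuclideanSpace ℝ (Fin n),
      |eval (fun i => x i) q| ≤ K * Real.exp (c * ‖x - a‖ ^ 2) := by
  induction q using MvPolynomial.induction_on with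
  | C r =>
    intro c hc
    refine ⟨|r|, abs_nonneg _, fun x => ?_⟩
    rw [eval_C]
    exact le_mul_of_one_le_right (abs_nonneg _) (Real.one_le_exp (by positivity))
  | add p q hp hq =>
    intro c hc
    obtain ⟨K, hK, h⟩ := hp c hc
    obtain ⟨K', hK', h'⟩ := hq c hc
    refine ⟨K + K', by positivity, fun x => ?_⟩
    rw [map_add, add_mul]
    exact (abs_add_le _ _).trans (add_le_add (h x) (h' x))
  | mul_X p i hp =>
    intro c hc
    obtain ⟨K, hK, h⟩ := hp (c / 2) (by positivity)
    refine ⟨K * (‖a‖ + 1 + 2 / c), by positivity, fun x => ?_⟩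
    rw [map_mul, eval_X, abs_mul]
    have h1 : |x i| ≤ (‖a‖ + 1 + 2 / c) * Real.exp (c / 2 * ‖x - a‖ ^ 2) := by
      have e1 : |x i| ≤ ‖x‖ := by
        simpa using PiLp.norm_apply_le x i
      have e2 : ‖x‖ ≤ ‖x - a‖ + ‖a‖ := by
        simpa using norm_add_le (x - a) a
      have e3 : c / 2 * ‖x - a‖ ^ 2 + 1 ≤ Real.exp (c / 2 * ‖x - a‖ ^ 2) := Real.add_one_le_exp _
      have e4 : ‖x - a‖ ≤ 1 + ‖x - a‖ ^ 2 := by nlinarith [sq_nonneg (‖x - a‖ - 1)]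
      have e5 : (‖a‖ + 1 + 2 / c) * (c / 2 * ‖x - a‖ ^ 2 + 1)
          ≤ (‖a‖ + 1 + 2 / c) * Real.exp (c / 2 * ‖x - a‖ ^ 2) :=
        mul_le_mul_of_nonneg_left e3 (by positivity)
      have e6 : (‖a‖ + 1 + 2 / c) * (c / 2 * ‖x - a‖ ^ 2 + 1)
          = ‖a‖ + 1 + ‖x - a‖ ^ 2 + ((‖a‖ + 1) * (c / 2 * ‖x - a‖ ^ 2) + 2 / c) := by
        field_simp
        ring
      have e7 : 0 ≤ (‖a‖ + 1) * (c / 2 * ‖x - a‖ ^ 2) + 2 / c := by positivity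
      linarith
    calc |eval (fun i => x i) p| * |x i|
        ≤ (K * Real.exp (c / 2 * ‖x - a‖ ^ 2)) *
          ((‖a‖ + 1 + 2 / c) * Real.exp (c / 2 * ‖x - a‖ ^ 2)) :=
          mul_le_mul (h x) h1 (abs_nonneg _) (by positivity)
      _ = K * (‖a‖ + 1 + 2 / c) *
          (Real.exp (c / 2 * ‖x - a‖ ^ 2) * Real.exp (c / 2 * ‖x - a‖ ^ 2)) := by ring
      _ = _ := by rw [← Real.exp_add]; ring_nf

lemma aux_cont (q : MvPolynomial (Fin n) ℝ) :
    Continuous (fun x : EuclideanSpace ℝ (Fin n) => eval (fun i => x i) q) :=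
  (MvPolynomial.continuous_eval q).comp (by fun_prop)

lemma aux_gauss (a : EuclideanSpace ℝ (Fin n)) (b : ℝ) (hb : 0 < b) :
    Integrable (fun x : EuclideanSpace ℝ (Fin n) => Real.exp (-b * ‖x - a‖ ^ 2)) := by
  have h := GaussianFourier.integrable_cexp_neg_mul_sq_norm_add
    (V := EuclideanSpace ℝ (Fin n)) (b := (b : ℂ)) (by simpa using hb) 0 0
  have h2 : Integrable (fun x : EuclideanSpace ℝ (Fin n) => Real.exp (-b * ‖x‖ ^ 2)) := by
    refine h.norm.congr (Filter.Eventually.of_forall fun x => ?_)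
    simp only [Complex.norm_exp]
    congr 1
    simp [← Complex.ofReal_pow]
  exact h2.comp_sub_right a

lemma aux_int (a : EuclideanSpace ℝ (Fin n)) (b : ℝ) (hb : 0 < b)
    (q : MvPolynomial (Fin n) ℝ) :
    Integrable (fun x : EuclideanSpace ℝ (Fin n) =>
      eval (fun i => x i) q * Real.exp (-b * ‖x - a‖ ^ 2)) := by
  obtain ⟨K, hK, h⟩ := aux_growth a q (b / 2) (by positivity)
  refine ((aux_gauss a (b / 2) (by positivity)).const_mul K).mono' ?_ ?_
  · exact ((aux_cont q).mul (by fun_prop)).aestronglyMeasurable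
  · refine Filter.Eventually.of_forall fun x => ?_
    rw [norm_mul, Real.norm_eq_abs, Real.norm_eq_abs, Real.abs_exp]
    calc _ ≤ K * Real.exp (b / 2 * ‖x - a‖ ^ 2) * Real.exp (-b * ‖x - a‖ ^ 2) :=
          mul_le_mul_of_nonneg_right (h x) (Real.exp_pos _).le
      _ = _ := by rw [mul_assoc, ← Real.exp_add]; ring_nf

/-- The Gaussian functional on polynomials. -/
def gfun (a : EuclideanSpace ℝ (Fin n)) (b : ℝ) (hb : 0 < b) :
    MvPolynomial (Fin n) ℝ →ₗ[ℝ] ℝ where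
  toFun q := ∫ x : EuclideanSpace ℝ (Fin n),
    eval (fun i => x i) q * Real.exp (-b * ‖x - a‖ ^ 2)
  map_add' p q := by
    rw [← integral_add (aux_int a b hb p) (aux_int a b hb q)]
    simp only [map_add, add_mul]
  map_smul' r q := by
    rw [RingHom.id_apply, smul_eq_mul, ← integral_const_mul]
    simp only [smul_eval, mul_assoc]

lemma aux_deriv_poly (x : EuclideanSpace ℝ (Fin n)) (i : Fin n) (q : MvPolynomial (Fin n) ℝ) :
    HasLineDerivAt ℝ (fun x : EuclideanSpace ℝ (Fin n) => eval (fun i => x i) q)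
      (eval (fun i => x i) (pderiv i q)) x (EuclideanSpace.single i 1) := by
  unfold HasLineDerivAt
  induction q using MvPolynomial.induction_on with
  | C r => simpa using hasDerivAt_const (0 : ℝ) r
  | add p q hp hq => simpa [Pi.add_def] using hp.add hq
  | mul_X p j hp =>
    have h1 : HasDerivAt (fun t : ℝ => (x + t • EuclideanSpace.single i (1 : ℝ)) j)
        (eval (fun i => x i) (pderiv i (X j : MvPolynomial (Fin n) ℝ))) 0 := by
      by_cases h : j = i
      · subst h
        simpa using (hasDerivAt_id (0 : ℝ)).const_add (x j)
      · simpa [h] using hasDerivAt_const (0 : ℝ) (x j)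
    have := hp.mul h1
    simp only [pderiv_mul, map_mul, map_add, eval_X] at this ⊢
    simpa [Pi.mul_def] using this

lemma aux_deriv_gauss (x a : EuclideanSpace ℝ (Fin n)) (b : ℝ) (i : Fin n) :
    HasLineDerivAt ℝ (fun x : EuclideanSpace ℝ (Fin n) => Real.exp (-b * ‖x - a‖ ^ 2))
      (-(2 * b * (x i - a i)) * Real.exp (-b * ‖x - a‖ ^ 2)) x (EuclideanSpace.single i 1) := by
  unfold HasLineDerivAt
  have h0 : HasDerivAt (fun t : ℝ => (x + t • EuclideanSpace.single i (1 : ℝ)) - a)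
      (EuclideanSpace.single i (1 : ℝ)) 0 := by
    simpa using (((hasDerivAt_id (0 : ℝ)).smul_const
      (EuclideanSpace.single i (1 : ℝ))).const_add x).sub_const a
  have h := ((h0.norm_sq).const_mul (-b)).exp
  refine h.congr_deriv ?_
  simp [EuclideanSpace.inner_single_right]
  ring

lemma gfun_ibp (a : EuclideanSpace ℝ (Fin n)) (b : ℝ) (hb : 0 < b) (i : Fin n)
    (q : MvPolynomial (Fin n) ℝ) :
    gfun a b hb (pderiv i q) = gfun a b hb (C (2 * b) * (X i - C (a i)) * q) := by
  have e : ∀ x : EuclideanSpace ℝ (Fin n),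
      eval (fun i => x i) q * (-(2 * b * (x i - a i)) * Real.exp (-b * ‖x - a‖ ^ 2))
      = - (eval (fun i => x i) (C (2 * b) * (X i - C (a i)) * q)
          * Real.exp (-b * ‖x - a‖ ^ 2)) := by
    intro x
    simp
    ring
  have h := integral_bilinear_hasLineDerivAt_right_eq_neg_left_of_integrable
    (μ := (volume : Measure (EuclideanSpace ℝ (Fin n))))
    (f := fun x => eval (fun i => x i) q) (f' := fun x => eval (fun i => x i) (pderiv i q))
    (g := fun x => Real.exp (-b * ‖x - a‖ ^ 2))
    (g' := fun x => -(2 * b * (x i - a i)) * Real.exp (-b * ‖x - a‖ ^ 2))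
    (v := EuclideanSpace.single i 1) (B := ContinuousLinearMap.mul ℝ ℝ)
    (by simpa using aux_int a b hb (pderiv i q))
    (by
      simp only [ContinuousLinearMap.mul_apply', e]
      exact (aux_int a b hb _).neg)
    (by simpa using aux_int a b hb q)
    (fun x _ => aux_deriv_poly x i q) (fun x _ => aux_deriv_gauss x a b i)
  simp only [ContinuousLinearMap.mul_apply', e, integral_neg] at h
  exact (neg_injective h).symm

lemma gfun_pos (a : EuclideanSpace ℝ (Fin n)) (b : ℝ) (hb : 0 < b)
    (q : MvPolynomial (Fin n) ℝ) : 0 ≤ gfun a b hb (q * q) := by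
  refine integral_nonneg fun x => ?_
  simp only [map_mul, Pi.zero_apply]
  exact mul_nonneg (mul_self_nonneg _) (Real.exp_pos _).le

/-- `∑ᵢ b (xᵢ - aᵢ)²` as a polynomial. -/
def fpol (a : EuclideanSpace ℝ (Fin n)) (b : ℝ) : MvPolynomial (Fin n) ℝ :=
  ∑ i, C b * (X i - C (a i)) ^ 2

lemma eval_fpol (a x : EuclideanSpace ℝ (Fin n)) (b : ℝ) :
    eval (fun i => x i) (fpol a b) = b * ‖x - a‖ ^ 2 := by
  simp [fpol, EuclideanSpace.norm_sq_eq, Finset.mul_sum]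

lemma aux_moment (a : EuclideanSpace ℝ (Fin n)) (b : ℝ) (hb : 0 < b) (m : ℕ)
    (p : MvPolynomial (Fin n) ℝ) (hp : p.totalDegree ≤ m) :
    gfun a b hb (fpol a b * (p * p)) ≤ n * (2 * m + 1) * gfun a b hb (p * p) := by
  have key : ∀ i : Fin n, gfun a b hb (C b * (X i - C (a i)) ^ 2 * (p * p))
      ≤ (2 * m + 1) * gfun a b hb (p * p) := by
    intro i
    have h := aux_Y (gfun a b hb) (gfun_pos a b hb) i (2 * b) (by positivity)
      (C (2 * b) * (X i - C (a i))) (by simp [pderiv_C_mul])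
      (gfun_ibp a b hb i) m p hp
    have e : C (2 * b) * (X i - C (a i)) * p * (C (2 * b) * (X i - C (a i)) * p)
        = (4 * b) • (C b * (X i - C (a i)) ^ 2 * (p * p)) := by
      simp only [smul_eq_C_mul, map_mul, map_ofNat]
      ring
    rw [e, map_smul, smul_eq_mul] at h
    have : 0 < 4 * b := by positivity
    refine le_of_mul_le_mul_left (h.trans_eq ?_) this
    ring
  rw [fpol, Finset.sum_mul, map_sum]
  refine (Finset.sum_le_sum fun i _ => key i).trans_eq ?_
  simp
  ring

lemma aux_main (a : EuclideanSpace ℝ (Fin n)) (b : ℝ) (hb : 0 < b) (m : ℕ)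
    (p : MvPolynomial (Fin n) ℝ) (hp : p.totalDegree ≤ m) (α : ℝ) (hα : 0 < α) :
    ∫ x : EuclideanSpace ℝ (Fin n),
        (eval (fun i => x i) p) ^ 2 * Real.exp (-b * ‖x - a‖ ^ 2)
      ≤ Real.exp ((2 * n + 1) * α * (1 + m)) *
        ∫ x : EuclideanSpace ℝ (Fin n),
          (eval (fun i => x i) p) ^ 2 * Real.exp (-α * (b * ‖x - a‖ ^ 2))
            * Real.exp (-b * ‖x - a‖ ^ 2) := by
  set c : ℝ := (2 * n + 1) * (1 + m) with hc
  have hM := aux_moment a b hb m p hp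
  have hP := gfun_pos a b hb p
  have hM2 : gfun a b hb (fpol a b * (p * p)) ≤ c * gfun a b hb (p * p) := by
    refine hM.trans (mul_le_mul_of_nonneg_right ?_ hP)
    rw [hc]
    have : (0 : ℝ) ≤ n := by positivity
    have : (0 : ℝ) ≤ m := by positivity
    nlinarith
  -- the polynomial minorant
  set r : MvPolynomial (Fin n) ℝ := p * p - α • (fpol a b * (p * p) - c • (p * p)) with hr
  have hr1 : gfun a b hb (p * p) ≤ gfun a b hb r := by
    rw [hr]
    simp only [map_sub, map_smul, smul_eq_mul]
    nlinarith
  have hr2 : gfun a b hb r ≤ ∫ x : EuclideanSpace ℝ (Fin n), Real.exp (c * α) *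
      ((eval (fun i => x i) p) ^ 2 * Real.exp (-α * (b * ‖x - a‖ ^ 2))
            * Real.exp (-b * ‖x - a‖ ^ 2)) := by
    refine integral_mono (aux_int a b hb r) (Integrable.const_mul ?_ _) fun x => ?_
    · have := aux_int a (α * b + b) (by positivity) (p * p)
      refine this.congr (Filter.Eventually.of_forall fun x => ?_)
      simp only [map_mul]
      rw [mul_assoc ((eval (fun i => x i) p) ^ 2), ← Real.exp_add]
      ring_nf
    · simp only [hr, map_sub, map_mul, smul_eval, eval_fpol]
      have h1 := Real.add_one_le_exp (c * α + -α * (b * ‖x - a‖ ^ 2))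
      rw [Real.exp_add] at h1
      have h2 : 0 ≤ (eval (fun i => x i) p) ^ 2 * Real.exp (-b * ‖x - a‖ ^ 2) := by positivity
      have h3 := mul_le_mul_of_nonneg_right h1 h2
      refine le_trans (le_of_eq ?_) (h3.trans_eq ?_) <;> ring
  rw [integral_const_mul] at hr2
  have e : gfun a b hb (p * p) = ∫ x : EuclideanSpace ℝ (Fin n),
        (eval (fun i => x i) p) ^ 2 * Real.exp (-b * ‖x - a‖ ^ 2) := by
    simp [gfun, sq]
  rw [← e, show (2 * (n : ℝ) + 1) * α * (1 + m) = c * α by rw [hc]; ring]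
  exact hr1.trans hr2

lemma aux_meas (a : EuclideanSpace ℝ (Fin n)) (τ : ℝ) (hτ : 0 < τ)
    (g : EuclideanSpace ℝ (Fin n) → ℝ) :
    ∫ x, g x ∂(gmeas n a τ) = (4 * Real.pi * τ) ^ (-(n : ℝ) / 2) *
      ∫ x, g x * Real.exp (-(1 / (4 * τ)) * ‖x - a‖ ^ 2) := by
  unfold gmeas
  rw [integral_withDensity_eq_integral_toReal_smul
    (Measurable.ennreal_ofReal (Continuous.measurable (by fun_prop)))
    (Filter.Eventually.of_forall fun x => ENNReal.ofReal_lt_top), ← integral_const_mul]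
  refine integral_congr_ae (Filter.Eventually.of_forall fun x => ?_)
  simp only
  rw [ENNReal.toReal_ofReal (by positivity), smul_eq_mul,
    show -‖x - a‖ ^ 2 / (4 * τ) = -(1 / (4 * τ)) * ‖x - a‖ ^ 2 by ring]
  ring

end Analysis

/-- Weighted `L²` comparability for polynomials against Gaussians: there is `C = C(n)`
such that for every `α > 0`, every nonnegative integer `m`, every polynomial `p` on `ℝⁿ`
of degree at most `m`, and every base point `x₀`, `t < t₀`:
`∫ p² dν_{x₀;t} ≤ e^{Cα(1+m)} ∫ p² e^{−α f_{x₀}} dν_{x₀;t}`,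
where `f_{x₀}(x) = |x−x₀|²/(4(t₀−t))`. -/
theorem statement_12 (n : ℕ) :
    ∃ C : ℝ, 0 < C ∧
    ∀ α : ℝ, 0 < α → ∀ (m : ℕ) (P : MvPolynomial (Fin n) ℝ), P.totalDegree ≤ m →
    ∀ (x₀ : EuclideanSpace ℝ (Fin n)) (t t₀ : ℝ), t < t₀ →
      ∫ x, (MvPolynomial.eval (fun i => x i) P) ^ 2 ∂(gmeas n x₀ (t₀ - t))
        ≤ Real.exp (C * α * (1 + (m : ℝ))) *
          ∫ x, (MvPolynomial.eval (fun i => x i) P) ^ 2 *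
            Real.exp (-α * (‖x - x₀‖ ^ 2 / (4 * (t₀ - t)))) ∂(gmeas n x₀ (t₀ - t)) := by
  refine ⟨2 * n + 1, by positivity, ?_⟩
  intro α hα m P hP x₀ t t₀ ht
  have hτ : 0 < t₀ - t := sub_pos.2 ht
  rw [aux_meas x₀ _ hτ, aux_meas x₀ _ hτ, mul_left_comm]
  refine mul_le_mul_of_nonneg_left ?_ (by positivity)
  have h := aux_main x₀ (1 / (4 * (t₀ - t))) (by positivity) m P hP α hα
  refine h.trans_eq ?_
  simp only [one_div, inv_mul_eq_div]
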